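/- arXiv:0711.2374 — 2 statements merged into one kernel-verified Lean document; each statement's English description precedes it below -/
import Mathlib

section
/- Let W : ℕ → {a,b} be a recurrent infinite word over the two-letter alphabet {a,b}. Then the following are equivalent: (1) W is Sturmian, i.e. for every n ≥ 1 the number of distinct factors of W of length n equals n+1; (2) W is not eventually periodic and W is balanced, i.e. for any two factors u, v of W of the same length, the numbers of occurrences of the letter a in u and in v differ by at most 1. -/
/-- The two-letter alphabet `{a, b}`. -/
inductive AB : Type
  | a : AB
  | b : AB
  deriving DecidableEq

/-- The finite word `u` occurs in the infinite word `W` at position `i`. -/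
def occursAt {A : Type*} (W : ℕ → A) (u : List A) (i : ℕ) : Prop :=
  u = (List.range u.length).map (fun j => W (i + j))

/-- `u` is a factor (subword) of the infinite word `W`. -/
def IsFactor {A : Type*} (W : ℕ → A) (u : List A) : Prop :=
  ∃ i, occursAt W u i

/-- `W` is recurrent: every factor occurs at infinitely many positions. -/
def Recurrent {A : Type*} (W : ℕ → A) : Prop :=
  ∀ u, IsFactor W u → ∀ N, ∃ i, N ≤ i ∧ occursAt W u i

/-- The complexity function: the number of distinct factors of `W` of length `n`. -/
noncomputable def complexity {A : Type*} (W : ℕ → A) (n : ℕ) : ℕ :=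
  {u : List A | u.length = n ∧ IsFactor W u}.ncard

/-- `W` is Sturmian: it has exactly `n + 1` factors of length `n` for all `n ≥ 1`. -/
def Sturmian (W : ℕ → AB) : Prop :=
  ∀ n, 1 ≤ n → complexity W n = n + 1

/-- `W` is eventually periodic. -/
def EventuallyPeriodic {A : Type*} (W : ℕ → A) : Prop :=
  ∃ p, 1 ≤ p ∧ ∃ N, ∀ n, N ≤ n → W (n + p) = W n

/-- `W` is balanced: occurrence counts of the letter `a` in any two factors of
the same length differ by at most `1`. -/
def BalancedWord (W : ℕ → AB) : Prop :=
  ∀ u v : List AB, IsFactor W u → IsFactor W v → u.length = v.length →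
    |(u.count AB.a : ℤ) - (v.count AB.a : ℤ)| ≤ 1

namespace SturmAux

/-- The factor of length `n` at position `i`. -/
def fac (W : ℕ → AB) (n i : ℕ) : List AB := (List.range n).map (fun j => W (i + j))

lemma fac_length (W : ℕ → AB) (n i : ℕ) : (fac W n i).length = n := by simp [fac]

lemma fac_succ (W : ℕ → AB) (n i : ℕ) : fac W (n+1) i = fac W n i ++ [W (i+n)] := by
  simp [fac, List.range_succ]

lemma fac_eq_iff (W : ℕ → AB) (n i j : ℕ) :
    fac W n i = fac W n j ↔ ∀ k < n, W (i+k) = W (j+k) := by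
  simp [fac, List.map_inj_left]

lemma isFactor_iff (W : ℕ → AB) (u : List AB) : IsFactor W u ↔ ∃ i, u = fac W u.length i :=
  Iff.rfl

lemma factors_eq (W : ℕ → AB) (n : ℕ) :
    {u : List AB | u.length = n ∧ IsFactor W u} = Set.range (fac W n) := by
  ext u
  constructor
  · rintro ⟨rfl, i, h⟩
    exact ⟨i, h.symm⟩
  · rintro ⟨i, rfl⟩
    refine ⟨fac_length _ _ _, i, ?_⟩
    unfold occursAt
    rw [fac_length]; rfl

lemma complexity_eq (W : ℕ → AB) (n : ℕ) : complexity W n = (Set.range (fac W n)).ncard := by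
  rw [complexity, factors_eq]

instance : Finite AB := by
  refine Finite.of_surjective (fun b : Bool => if b then AB.a else AB.b) ?_
  rintro (_ | _)
  · exact ⟨true, rfl⟩
  · exact ⟨false, rfl⟩

lemma range_finite (W : ℕ → AB) (n : ℕ) : (Set.range (fac W n)).Finite := by
  refine (List.finite_length_eq AB n).subset ?_
  rintro _ ⟨i, rfl⟩
  exact fac_length _ _ _

/-- factors of length `n` that may be followed by `c`. -/
def extSet (W : ℕ → AB) (n : ℕ) (c : AB) : Set (List AB) := {u | ∃ i, fac W n i = u ∧ W (i+n) = c}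

/-- right special factors. -/
def RS (W : ℕ → AB) (n : ℕ) : Set (List AB) := extSet W n AB.a ∩ extSet W n AB.b

lemma range_eq (W : ℕ → AB) (n : ℕ) : Set.range (fac W n) = extSet W n AB.a ∪ extSet W n AB.b := by
  ext u
  constructor
  · rintro ⟨i, rfl⟩
    cases h : W (i+n)
    · exact Or.inl ⟨i, rfl, h⟩
    · exact Or.inr ⟨i, rfl, h⟩
  · rintro (⟨i, h, _⟩ | ⟨i, h, _⟩) <;> exact ⟨i, h⟩

lemma range_succ_eq (W : ℕ → AB) (n : ℕ) : Set.range (fac W (n+1)) =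
    Set.image (fun u => u ++ [AB.a]) (extSet W n AB.a) ∪
      Set.image (fun u => u ++ [AB.b]) (extSet W n AB.b) := by
  ext u
  constructor
  · rintro ⟨i, rfl⟩
    rw [fac_succ]
    cases h : W (i+n)
    · exact Or.inl ⟨_, ⟨i, rfl, h⟩, rfl⟩
    · exact Or.inr ⟨_, ⟨i, rfl, h⟩, rfl⟩
  · rintro (⟨_, ⟨i, rfl, h⟩, rfl⟩ | ⟨_, ⟨i, rfl, h⟩, rfl⟩) <;>
    exact ⟨i, by rw [fac_succ, h]⟩

lemma ext_finite (W : ℕ → AB) (n : ℕ) (c : AB) : (extSet W n c).Finite := by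
  refine (range_finite W n).subset ?_
  rintro _ ⟨i, rfl, _⟩
  exact ⟨i, rfl⟩

lemma complexity_succ (W : ℕ → AB) (n : ℕ) :
    complexity W (n+1) = complexity W n + (RS W n).ncard := by
  rw [complexity_eq, complexity_eq, range_succ_eq, range_eq, RS,
    Set.ncard_union_add_ncard_inter _ _ (ext_finite _ _ _) (ext_finite _ _ _),
    Set.ncard_union_eq _ ((ext_finite _ _ _).image _) ((ext_finite _ _ _).image _),
    Set.ncard_image_of_injective _ (List.append_left_injective _),
    Set.ncard_image_of_injective _ (List.append_left_injective _)]
  rw [Set.disjoint_left]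
  rintro _ ⟨u, _, rfl⟩ ⟨v, _, h⟩
  have := List.append_inj_right' h rfl
  simp at this

lemma complexity_zero (W : ℕ → AB) : complexity W 0 = 1 := by
  rw [complexity_eq]
  have : Set.range (fac W 0) = {[]} := by
    ext u; simp [fac, eq_comm]
  rw [this, Set.ncard_singleton]

lemma not_RS (W : ℕ → AB) (n s t : ℕ) (h : fac W n s ∉ RS W n) (e : fac W n t = fac W n s) :
    W (t+n) = W (s+n) := by
  by_contra hne
  apply h
  cases h1 : W (t+n) <;> cases h2 : W (s+n)
  · simp_all
  · exact ⟨⟨t, e, h1⟩, ⟨s, rfl, h2⟩⟩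
  · exact ⟨⟨s, rfl, h2⟩, ⟨t, e, h1⟩⟩
  · simp_all

lemma fac_shift (W : ℕ → AB) (n s t : ℕ) (e : fac W (n+1) t = fac W (n+1) s) :
    fac W n (t+1) = fac W n (s+1) := by
  rw [fac_eq_iff] at *
  intro k hk
  have := e (k+1) (by omega)
  rwa [show t + (k+1) = t+1+k by ring, show s + (k+1) = s+1+k by ring] at this

lemma evper (W : ℕ → AB) (n p q : ℕ) (hpq : p < q) (e : fac W n p = fac W n q)
    (h : ∀ s, p ≤ s → s < q → fac W n s ∉ RS W n) : EventuallyPeriodic W := by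
  have key : ∀ k, ∃ s, p ≤ s ∧ s < q ∧ fac W n (p+k) = fac W n s ∧ fac W n (q+k) = fac W n s := by
    intro k
    induction k with
    | zero => exact ⟨p, le_rfl, hpq, rfl, e.symm⟩
    | succ k ih =>
      obtain ⟨s, h1, h2, h3, h4⟩ := ih
      have a1 : fac W n (p+k+1) = fac W n (s+1) :=
        fac_shift W n _ _ (by rw [fac_succ, fac_succ, h3, not_RS W n s _ (h s h1 h2) h3])
      have a2 : fac W n (q+k+1) = fac W n (s+1) :=
        fac_shift W n _ _ (by rw [fac_succ, fac_succ, h4, not_RS W n s _ (h s h1 h2) h4])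
      by_cases hs : s + 1 < q
      · exact ⟨s+1, by omega, hs, a1, a2⟩
      · have : s + 1 = q := by omega
        rw [this, ← e] at a1 a2
        exact ⟨p, le_rfl, hpq, a1, a2⟩
  refine ⟨q - p, by omega, p, fun m hm => ?_⟩
  obtain ⟨s, h1, h2, h3, h4⟩ := key (m - p)
  have b1 : fac W (n+1) (p + (m-p)) = fac W (n+1) s := by
    rw [fac_succ, fac_succ, h3, not_RS W n s _ (h s h1 h2) h3]
  have b2 : fac W (n+1) (q + (m-p)) = fac W (n+1) s := by
    rw [fac_succ, fac_succ, h4, not_RS W n s _ (h s h1 h2) h4]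
  have b3 := (fac_eq_iff W _ _ _).1 (b2.trans b1.symm) 0 (by omega)
  rwa [show q + (m - p) + 0 = m + (q - p) by omega, show p + (m-p) + 0 = m by omega] at b3

lemma RS_nonempty (W : ℕ → AB) (h : ¬ EventuallyPeriodic W) (n : ℕ) : (RS W n).Nonempty := by
  by_contra hne
  rw [Set.not_nonempty_iff_eq_empty] at hne
  apply h
  have : ¬ Function.Injective (fac W n) := fun hi =>
    Set.infinite_range_of_injective hi (range_finite W n)
  simp only [Function.Injective, not_forall] at this
  obtain ⟨p, q, e, hpq⟩ := this
  rcases lt_or_gt_of_ne hpq with hl | hl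
  · exact evper W n p q hl e (by simp [hne])
  · exact evper W n q p hl e.symm (by simp [hne])

/-- letter indicator -/
def x (W : ℕ → AB) (i : ℕ) : ℤ := if W i = AB.a then 1 else 0

/-- prefix counts -/
def S (W : ℕ → AB) : ℕ → ℤ
  | 0 => 0
  | i+1 => S W i + x W i

lemma count_fac (W : ℕ → AB) (n i : ℕ) :
    ((fac W n i).count AB.a : ℤ) = S W (i+n) - S W i := by
  induction n with
  | zero => simp [fac]
  | succ n ih =>
    rw [fac_succ, List.count_append, ← add_assoc, S, Nat.cast_add, ih, x]
    cases W (i+n) <;> simp <;> ring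

lemma balanced_iff (W : ℕ → AB) : BalancedWord W ↔
    ∀ n i j, (S W (i+n) - S W i) - (S W (j+n) - S W j) ≤ 1 := by
  constructor
  · intro h n i j
    have f : ∀ i, IsFactor W (fac W n i) := fun i => ⟨i, by unfold occursAt; rw [fac_length]; rfl⟩
    have := h _ _ (f i) (f j) (by simp [fac_length])
    rw [count_fac, count_fac] at this
    exact (abs_le.1 this).2
  · rintro h u v ⟨i, hi⟩ ⟨j, hj⟩ hl
    change u = fac W u.length i at hi
    change v = fac W v.length j at hj
    rw [← hl] at hj
    rw [hi, hj, count_fac, count_fac, abs_le]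
    have := h u.length i j
    have := h u.length j i
    constructor <;> omega

lemma x_a {W : ℕ → AB} {i : ℕ} (h : W i = AB.a) : x W i = 1 := by simp [x, h]
lemma x_b {W : ℕ → AB} {i : ℕ} (h : W i = AB.b) : x W i = 0 := by simp [x, h]
lemma x_bd (W : ℕ → AB) (i : ℕ) : 0 ≤ x W i ∧ x W i ≤ 1 := by
  unfold x; split_ifs <;> simp
lemma x_inj {W : ℕ → AB} {i j : ℕ} (h : x W i = x W j) : W i = W j := by
  unfold x at h
  cases h1 : W i <;> cases h2 : W j <;> simp_all
lemma S_succ (W : ℕ → AB) (i : ℕ) : S W (i+1) = S W i + x W i := rfl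

lemma S_congr (W : ℕ → AB) (i j n : ℕ) (h : ∀ k < n, W (i+k) = W (j+k)) :
    S W (i+n) - S W i = S W (j+n) - S W j := by
  rw [← count_fac, ← count_fac, (fac_eq_iff W n i j).2 h]

lemma bal_aux (W : ℕ → AB) (hb : BalancedWord W) (n i j k : ℕ) (hk : k < n)
    (hi : W (i+k) = AB.a) (hj : W (j+k) = AB.b) (hin : W (i+n) = AB.a) (hjn : W (j+n) = AB.b)
    (hm : ∀ l, k < l → l < n → W (i+l) = W (j+l)) : False := by
  rw [balanced_iff] at hb
  have h1 := hb (n - k + 1) (i+k) (j+k)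
  have h2 := S_congr W (i+k+1) (j+k+1) (n-k-1) (by
    intro l hl
    have := hm (k+1+l) (by omega) (by omega)
    rwa [← add_assoc, ← add_assoc, ← add_assoc, ← add_assoc] at this)
  rw [show i + k + (n-k+1) = i+n+1 by omega, show j+k+(n-k+1) = j+n+1 by omega] at h1
  rw [show i + k + 1 + (n-k-1) = i+n by omega, show j+k+1+(n-k-1) = j+n by omega] at h2
  rw [S_succ, S_succ, x_a hin, x_b hjn] at h1
  rw [S_succ, S_succ, x_a hi, x_b hj] at h2
  omega

lemma RS_subsingleton (W : ℕ → AB) (hb : BalancedWord W) (n : ℕ) : (RS W n).Subsingleton := by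
  rintro u ⟨⟨i, hi, hia⟩, ⟨i', hi', hib⟩⟩ v ⟨⟨j, hj, hja⟩, ⟨j', hj', hjb⟩⟩
  by_contra hne
  have e1 := (fac_eq_iff W n i i').1 (hi.trans hi'.symm)
  have e2 := (fac_eq_iff W n j j').1 (hj.trans hj'.symm)
  have hex : ∃ d, d < n ∧ W (i + (n-1-d)) ≠ W (j + (n-1-d)) := by
    by_contra hc
    push Not at hc
    apply hne
    rw [← hi, ← hj, fac_eq_iff]
    intro k hk
    have := hc (n-1-k) (by omega)
    rwa [show n-1-(n-1-k) = k by omega] at this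
  classical
  obtain ⟨hd, hdne⟩ := Nat.find_spec hex
  have hmin : ∀ l, n - 1 - Nat.find hex < l → l < n → W (i+l) = W (j+l) := by
    intro l h1 h2
    have := Nat.find_min hex (m := n-1-l) (by omega)
    by_contra hc
    apply this
    refine ⟨by omega, ?_⟩
    rwa [show n-1-(n-1-l) = l by omega]
  generalize Nat.find hex = d at *
  have hk : n-1-d < n := by omega
  generalize n-1-d = k at *
  cases h1 : W (i+k) <;> cases h2 : W (j+k)
  · exact hdne (h1.trans h2.symm)
  · refine bal_aux W hb n i j' k hk h1 ((e2 k hk).symm.trans h2) hia hjb ?_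
    intro l h3 h4
    rw [hmin l h3 h4, e2 l h4]
  · refine bal_aux W hb n j i' k hk h2 ((e1 k hk).symm.trans h1) hja hib ?_
    intro l h3 h4
    rw [← hmin l h3 h4, e1 l h4]
  · exact hdne (h1.trans h2.symm)

lemma sturmian_of (W : ℕ → AB) (hp : ¬ EventuallyPeriodic W) (hb : BalancedWord W) :
    ∀ n, complexity W n = n + 1 := by
  intro n
  induction n with
  | zero => exact complexity_zero W
  | succ n ih =>
    rw [complexity_succ, ih]
    obtain ⟨u, hu⟩ := RS_nonempty W hp n
    rw [(RS_subsingleton W hb n).eq_singleton_of_mem hu, Set.ncard_singleton]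

lemma not_evper (W : ℕ → AB) (h : ∀ n, complexity W n = n + 1) : ¬ EventuallyPeriodic W := by
  rintro ⟨p, hp, N, hN⟩
  have h1 := h (N+p)
  rw [complexity_eq] at h1
  have hsub : Set.range (fac W (N+p)) ⊆ Set.image (fac W (N+p)) (Set.Iio (N+p)) := by
    rintro _ ⟨i, rfl⟩
    induction i using Nat.strong_induction_on with
    | _ i ih =>
      by_cases hi : i < N + p
      · exact ⟨i, hi, rfl⟩
      · have : fac W (N+p) i = fac W (N+p) (i-p) := by
          rw [fac_eq_iff]
          intro k _
          have := hN (i-p+k) (by omega)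
          rwa [show i-p+k+p = i+k by omega] at this
        rw [this]
        exact ih (i-p) (by omega)
  have h2 := Set.ncard_le_ncard hsub ((Set.finite_Iio _).image _)
  have h3 := Set.ncard_image_le (f := fac W (N+p)) (Set.finite_Iio (N+p))
  have h4 : (Set.Iio (N+p)).ncard = N+p := by
    rw [← Finset.coe_Iio, Set.ncard_coe_finset, Nat.card_Iio]
  omega

lemma core (W : ℕ → AB) (hc : ∀ n, complexity W n = n + 1) (m i j : ℕ)
    (hij : W i ≠ W j) (hi : W (i+m+1) = W i) (hj : W (j+m+1) = W j)
    (hm : ∀ k, 1 ≤ k → k ≤ m → W (i+k) = W (j+k))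
    (hpal : ∀ k, 1 ≤ k → k ≤ m → W (j+k) = W (j+(m+1-k)))
    (hRS : RS W (m+1) = {fac W (m+1) i}) : False := by
  have hne : ∀ s, s ≤ m+1 → fac W (m+1) (j+s) ≠ fac W (m+1) i := by
    intro s hs e
    rw [fac_eq_iff] at e
    have e0 := e 0 (by omega)
    rw [add_zero, add_zero] at e0
    rcases Nat.eq_zero_or_pos s with rfl | hs0
    · exact hij e0.symm
    rcases Nat.lt_or_ge m s with h1 | h1
    · have : s = m+1 := by omega
      subst this
      rw [← add_assoc, hj] at e0
      exact hij e0.symm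
    · have e1 := e (m+1-s) (by omega)
      rw [hm _ (by omega) (by omega), ← hpal s hs0 h1, e0,
        show j + s + (m+1-s) = j+m+1 by omega, hj] at e1
      exact hij e1.symm
  have hcard : (Set.range (fac W (m+1)) \ {fac W (m+1) i}).ncard = m+1 := by
    rw [Set.ncard_sdiff_singleton_of_mem (Set.mem_range_self i), ← complexity_eq, hc]
    omega
  obtain ⟨s, hs, t, ht, hst, e⟩ := Set.exists_ne_map_eq_of_ncard_lt_of_maps_to
    (s := Set.Iio (m+2)) (t := Set.range (fac W (m+1)) \ {fac W (m+1) i})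
    (f := fun s => fac W (m+1) (j+s))
    (by rw [hcard, ← Finset.coe_Iio, Set.ncard_coe_finset, Nat.card_Iio]; omega)
    (by
      intro s hs
      have : s < m+2 := hs
      exact ⟨⟨_, rfl⟩, hne s (by omega)⟩)
    ((range_finite W _).subset Set.sdiff_subset)
  have hs' : s < m+2 := hs
  have ht' : t < m+2 := ht
  have hn : ∀ r, j ≤ r → r < j + (m+2) → fac W (m+1) r ∉ RS W (m+1) := by
    intro r h1 h2 h3
    rw [hRS] at h3
    have := hne (r-j) (by omega)
    rw [show j + (r-j) = r by omega] at this
    exact this h3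
  apply not_evper W hc
  rcases lt_or_gt_of_ne hst with hl | hl
  · exact evper W (m+1) (j+s) (j+t) (by omega) e (fun r h1 h2 => hn r (by omega) (by omega))
  · exact evper W (m+1) (j+t) (j+s) (by omega) e.symm
      (fun r h1 h2 => hn r (by omega) (by omega))

lemma RS_single (W : ℕ → AB) (hc : ∀ n, complexity W n = n + 1) (n : ℕ) :
    ∃ u, RS W n = {u} := by
  rw [← Set.ncard_eq_one]
  have := complexity_succ W n
  rw [hc, hc] at this
  omega

lemma RS_tail (W : ℕ → AB) (n p : ℕ) (h : fac W (n+1) p ∈ RS W (n+1)) :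
    fac W n (p+1) ∈ RS W n := by
  obtain ⟨⟨i, h1, h2⟩, ⟨j, h3, h4⟩⟩ := h
  refine ⟨⟨i+1, fac_shift W n _ _ h1, ?_⟩, ⟨j+1, fac_shift W n _ _ h3, ?_⟩⟩
  · rw [← h2]; congr 1; ring
  · rw [← h4]; congr 1; ring

lemma balanced_of (W : ℕ → AB) (hc : ∀ n, complexity W n = n + 1) : BalancedWord W := by
  rw [balanced_iff]
  by_contra hcon
  have hex : ∃ n, ∃ i j, 2 ≤ (S W (i+n) - S W i) - (S W (j+n) - S W j) := by
    push Not at hcon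
    obtain ⟨n, i, j, h⟩ := hcon
    exact ⟨n, i, j, by omega⟩
  classical
  obtain ⟨i, j, hge⟩ := Nat.find_spec hex
  have hmin : ∀ k, k < Nat.find hex → ∀ i j, (S W (i+k) - S W i) - (S W (j+k) - S W j) ≤ 1 := by
    intro k hk i j
    by_contra h
    exact Nat.find_min hex hk ⟨i, j, by omega⟩
  generalize Nat.find hex = n at *
  clear hex hcon
  have hn2 : 2 ≤ n := by
    by_contra h
    have : n = 0 ∨ n = 1 := by omega
    rcases this with rfl | rfl
    · simp at hge
    · rw [S_succ, S_succ] at hge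
      have := x_bd W i
      have := x_bd W j
      omega
  obtain ⟨m, rfl⟩ : ∃ m, n = m+2 := ⟨n-2, by omega⟩
  have hD : ∀ k, 1 ≤ k → k ≤ m+1 → S W (i+k) - S W i = S W (j+k) - S W j + 1 := by
    intro k h1 h2
    have a1 := hmin k (by omega) i j
    have a2 := hmin (m+2-k) (by omega) (i+k) (j+k)
    rw [show i+k+(m+2-k) = i+(m+2) by omega, show j+k+(m+2-k) = j+(m+2) by omega] at a2
    omega
  have bi := x_bd W (i+m+1)
  have bj := x_bd W (j+m+1)
  have bi0 := x_bd W i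
  have bj0 := x_bd W j
  have s1 : S W (i+(m+2)) = S W (i+(m+1)) + x W (i+m+1) := rfl
  have s2 : S W (j+(m+2)) = S W (j+(m+1)) + x W (j+m+1) := rfl
  have d1 := hD 1 le_rfl (by omega)
  rw [S_succ, S_succ] at d1
  have dm := hD (m+1) (by omega) le_rfl
  have hij : W i ≠ W j := by
    intro h
    have : x W i = x W j := by unfold x; rw [h]
    omega
  have hi : W (i+m+1) = W i := x_inj (by omega)
  have hj : W (j+m+1) = W j := x_inj (by omega)
  have hm : ∀ k, 1 ≤ k → k ≤ m → W (i+k) = W (j+k) := by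
    intro k h1 h2
    apply x_inj
    have a1 := hD k h1 (by omega)
    have a2 := hD (k+1) (by omega) (by omega)
    rw [← add_assoc, ← add_assoc, S_succ, S_succ] at a2
    omega
  have hQ : ∀ k, k ≤ m →
      S W (j+(k+1)) - S W j + (S W (j+(m+1-k)) - S W j) = S W (j+(m+2)) - S W j := by
    intro k hk
    have a1 := hmin (k+1) (by omega) i (j+(m+1-k))
    have a2 := hmin (k+1) (by omega) (i+(m+1-k)) j
    rw [show j+(m+1-k)+(k+1) = j+(m+2) by omega] at a1
    rw [show i+(m+1-k)+(k+1) = i+(m+2) by omega] at a2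
    have a3 := hD (k+1) (by omega) (by omega)
    have a4 := hD (m+1-k) (by omega) (by omega)
    omega
  have hpal : ∀ k, 1 ≤ k → k ≤ m → W (j+k) = W (j+(m+1-k)) := by
    intro k h1 h2
    apply x_inj
    have a1 := hQ k h2
    have a2 := hQ (k-1) (by omega)
    rw [show k - 1 + 1 = k by omega, show m + 1 - (k-1) = m+1-k+1 by omega,
      ← add_assoc j (m+1-k) 1, S_succ] at a2
    rw [← add_assoc j k 1, S_succ] at a1
    omega
  obtain ⟨u, hu⟩ := RS_single W hc (m+1)
  obtain ⟨v, hv⟩ := RS_single W hc m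
  have hu' : u ∈ RS W (m+1) := by rw [hu]; rfl
  obtain ⟨p, rfl, _⟩ := hu'.1
  have ht := RS_tail W m p hu'
  have hmid : fac W m (i+1) = fac W m (j+1) := by
    rw [fac_eq_iff]
    intro k hk
    have := hm (1+k) (by omega) (by omega)
    rwa [← add_assoc, ← add_assoc] at this
  have hw : fac W m (i+1) ∈ RS W m := by
    have e1 : W (i+1+m) = W i := by rw [← hi]; congr 1; ring
    have e2 : W (j+1+m) = W j := by rw [← hj]; congr 1; ring
    by_contra h
    have := not_RS W m (i+1) (j+1) h hmid.symm
    rw [e1, e2] at this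
    exact hij this.symm
  have hpi : fac W m (p+1) = fac W m (i+1) := by
    rw [hv] at ht hw
    exact (Set.mem_singleton_iff.1 ht).trans (Set.mem_singleton_iff.1 hw).symm
  have hcons : ∀ r, W p = W r → fac W m (p+1) = fac W m (r+1) →
      fac W (m+1) p = fac W (m+1) r := by
    intro r h0 h
    rw [fac_eq_iff] at h ⊢
    intro k hk
    rcases Nat.eq_zero_or_pos k with rfl | hk0
    · exact h0
    · have := h (k-1) (by omega)
      rwa [show p+1+(k-1) = p+k by omega, show r+1+(k-1) = r+k by omega] at this
  have hor : W p = W i ∨ W p = W j := by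
    cases h1 : W p <;> cases h2 : W i <;> cases h3 : W j <;> simp_all
  rcases hor with h | h
  · rw [hcons i h hpi] at hu
    exact core W hc m i j hij hi hj hm hpal hu
  · rw [hcons j h (hpi.trans hmid)] at hu
    refine core W hc m j i hij.symm hj hi (fun k h1 h2 => (hm k h1 h2).symm) ?_ hu
    intro k h1 h2
    rw [hm k h1 h2, hm _ (by omega) (by omega), hpal k h1 h2]

end SturmAux

/-- A recurrent binary word is Sturmian iff it is non-(eventually-)periodic and balanced. -/
theorem sturmian_iff_balanced_nonperiodic (W : ℕ → AB) (hrec : Recurrent W) :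
    Sturmian W ↔ (¬ EventuallyPeriodic W ∧ BalancedWord W) := by
  constructor
  · intro h
    have hc : ∀ n, complexity W n = n + 1 := by
      intro n
      rcases Nat.eq_zero_or_pos n with rfl | hn
      · exact SturmAux.complexity_zero W
      · exact h n hn
    exact ⟨SturmAux.not_evper W hc, SturmAux.balanced_of W hc⟩
  · rintro ⟨h1, h2⟩ n _
    exact SturmAux.sturmian_of W h1 h2 n
end

section
/- Let W : ℕ → {a,b} be a recurrent infinite word over the two-letter alphabet {a,b}. Then W is Sturmian (p_W(n) = n+1 for all n ≥ 1) if and only if W is a mechanical word with irrational slope: there exist an irrational α ∈ (0,1), a point x₀ ∈ [0,1), and a half-open arc U of the circle ℝ/ℤ of length α (i.e. U is the image mod 1 of an interval [c, c+α) or (c, c+α]) such that for every n ≥ 0, W(n) = a if x₀ + nα (mod 1) ∈ U and W(n) = b otherwise. -/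
/-- `W` is a mechanical word with irrational slope: there are an irrational
`α ∈ (0,1)`, a point `x₀ ∈ [0,1)` and a half-open arc of length `α` on the circle
`ℝ/ℤ` (the image mod 1 of `[c, c+α)` or of `(c, c+α]`) such that `W n = a` exactly
when `x₀ + n·α (mod 1)` lies in the arc, and `W n = b` otherwise. -/
def MechanicalIrrational (W : ℕ → AB) : Prop :=
  ∃ α : ℝ, Irrational α ∧ 0 < α ∧ α < 1 ∧
    ∃ x₀ ∈ Set.Ico (0 : ℝ) 1, ∃ c : ℝ,
      ((∀ n : ℕ, (W n = AB.a ↔ ∃ k : ℤ, x₀ + n * α + k ∈ Set.Ico c (c + α)) ∧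
                 (W n = AB.b ↔ ¬ ∃ k : ℤ, x₀ + n * α + k ∈ Set.Ico c (c + α))) ∨
       (∀ n : ℕ, (W n = AB.a ↔ ∃ k : ℤ, x₀ + n * α + k ∈ Set.Ioc c (c + α)) ∧
                 (W n = AB.b ↔ ¬ ∃ k : ℤ, x₀ + n * α + k ∈ Set.Ioc c (c + α))))

/-! ### Windows and complexity -/

instance AB.instFintype : Fintype AB :=
  ⟨{AB.a, AB.b}, fun x => by cases x <;> simp⟩

/-- The window of length `n` at position `i`. -/
def win (W : ℕ → AB) (n i : ℕ) : Fin n → AB := fun t => W (i + t)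

theorem win_eq_iff (W : ℕ → AB) (n i j : ℕ) :
    win W n i = win W n j ↔ ∀ t, t < n → W (i + t) = W (j + t) := by
  constructor
  · intro h t ht
    exact congrFun h ⟨t, ht⟩
  · intro h
    funext t
    exact h t t.2

theorem complexity_eq (W : ℕ → AB) (n : ℕ) :
    complexity W n = (Set.range (win W n)).ncard := by
  have h : {u : List AB | u.length = n ∧ IsFactor W u} =
      (fun f : Fin n → AB => List.ofFn f) '' Set.range (win W n) := by
    ext u
    simp only [Set.mem_ofPred_eq, IsFactor, occursAt, Set.mem_image, Set.mem_range,
      exists_exists_eq_and]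
    have key : ∀ i, List.ofFn (win W n i) = (List.range n).map (fun j => W (i + j)) := by
      intro i
      apply List.ext_getElem
      · simp
      · intro k h1 h2
        simp [win]
    constructor
    · rintro ⟨hl, i, hi⟩
      refine ⟨i, ?_⟩
      rw [key, ← hl]
      exact hi.symm
    · rintro ⟨i, hi⟩
      have hl : u.length = n := by rw [← hi]; simp
      refine ⟨hl, i, ?_⟩
      rw [hl, ← key, hi]
  rw [complexity, h, Set.ncard_image_of_injective _ List.ofFn_injective]

theorem card_windows {W : ℕ → AB} (hS : Sturmian W) (n : ℕ) :
    (Set.range (win W n)).ncard = n + 1 := by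
  rcases Nat.eq_zero_or_pos n with rfl | hn
  · have : Set.range (win W 0) = {fun t => t.elim0} := by
      ext f
      simp only [Set.mem_range, Set.mem_singleton_iff]
      constructor
      · rintro ⟨i, rfl⟩
        funext t
        exact t.elim0
      · rintro rfl
        refine ⟨0, ?_⟩
        funext t
        exact t.elim0
    rw [this]
    simp
  · rw [← complexity_eq, hS n hn]

/-- A Sturmian word is not eventually periodic. -/
theorem not_periodic {W : ℕ → AB} (hS : Sturmian W) (N q : ℕ) (hq : 0 < q)
    (h : ∀ i, N ≤ i → W (i + q) = W i) : False := by
  have hsub : Set.range (win W (N + q)) ⊆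
      (win W (N + q)) '' ((Finset.range (N + q) : Finset ℕ) : Set ℕ) := by
    rintro _ ⟨i, rfl⟩
    induction i using Nat.strong_induction_on with
    | _ i ih =>
      by_cases hi : i < N + q
      · exact ⟨i, by simpa using hi, rfl⟩
      · have h1 := ih (i - q) (by omega)
        have h2 : win W (N + q) i = win W (N + q) (i - q) := by
          rw [win_eq_iff]
          intro t _
          rw [← h (i - q + t) (by omega)]
          congr 1
          omega
        rw [h2]
        exact h1
  have h1 := Set.ncard_le_ncard hsub (Set.toFinite _)
  have h2 := Set.ncard_image_le (f := win W (N + q))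
    (Finset.finite_toSet (Finset.range (N + q)))
  rw [Set.ncard_coe_finset, Finset.card_range] at h2
  rw [card_windows hS] at h1
  omega

theorem win_succ_eq_iff (W : ℕ → AB) (n i j : ℕ) :
    win W (n + 1) i = win W (n + 1) j ↔ win W n i = win W n j ∧ W (i + n) = W (j + n) := by
  simp only [win_eq_iff]
  constructor
  · intro h
    exact ⟨fun t ht => h t (by omega), h n (by omega)⟩
  · rintro ⟨h1, h2⟩ t ht
    rcases Nat.lt_succ_iff_lt_or_eq.1 ht with h | rfl
    · exact h1 t h
    · exact h2

theorem init_win (W : ℕ → AB) (n i : ℕ) :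
    (fun t : Fin n => win W (n + 1) i t.castSucc) = win W n i := rfl

/-- Uniqueness of the right special factor of each length. -/
theorem special_unique {W : ℕ → AB} (hS : Sturmian W) (n i i' j j' : ℕ)
    (hi : win W n i = win W n i') (hi2 : W (i + n) ≠ W (i' + n))
    (hj : win W n j = win W n j') (hj2 : W (j + n) ≠ W (j' + n)) :
    win W n i = win W n j := by
  by_contra hne
  have hsub : Set.range (win W n) ⊆
      (fun (f : Fin (n + 1) → AB) (t : Fin n) => f t.castSucc) ''
        (Set.range (win W (n + 1)) \ {win W (n + 1) i', win W (n + 1) j'}) := by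
    rintro _ ⟨k, rfl⟩
    by_cases h1 : win W (n + 1) k = win W (n + 1) i'
    · refine ⟨win W (n + 1) i, ⟨⟨i, rfl⟩, ?_⟩, ?_⟩
      · simp only [Set.mem_insert_iff, Set.mem_singleton_iff, win_succ_eq_iff]
        rintro (⟨_, h⟩ | ⟨h, _⟩)
        · exact hi2 h
        · exact hne (h.trans hj.symm)
      · rw [win_succ_eq_iff] at h1
        simp only [init_win]
        rw [h1.1, hi]
    by_cases h2 : win W (n + 1) k = win W (n + 1) j'
    · refine ⟨win W (n + 1) j, ⟨⟨j, rfl⟩, ?_⟩, ?_⟩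
      · simp only [Set.mem_insert_iff, Set.mem_singleton_iff, win_succ_eq_iff]
        rintro (⟨h, _⟩ | ⟨_, h⟩)
        · exact hne (hi.trans h.symm)
        · exact hj2 h
      · rw [win_succ_eq_iff] at h2
        simp only [init_win]
        rw [h2.1, hj]
    · exact ⟨win W (n + 1) k, ⟨⟨k, rfl⟩, by simp [h1, h2]⟩, rfl⟩
  have c1 := Set.ncard_le_ncard hsub (Set.toFinite _)
  have c2 := Set.ncard_image_le (f := fun (f : Fin (n + 1) → AB) (t : Fin n) => f t.castSucc)
    (Set.toFinite (Set.range (win W (n + 1)) \ {win W (n + 1) i', win W (n + 1) j'}))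
  have hpair : ({win W (n + 1) i', win W (n + 1) j'} : Set (Fin (n + 1) → AB)).ncard = 2 := by
    apply Set.ncard_pair
    rw [Ne, win_succ_eq_iff]
    rintro ⟨h, _⟩
    exact hne (hi.trans (h.trans hj.symm))
  have hincl : ({win W (n + 1) i', win W (n + 1) j'} : Set (Fin (n + 1) → AB)) ⊆
      Set.range (win W (n + 1)) := by
    rintro _ (rfl | rfl)
    · exact ⟨_, rfl⟩
    · exact ⟨_, rfl⟩
  have c3 := Set.ncard_sdiff_add_ncard_of_subset hincl (Set.toFinite _)
  rw [hpair, card_windows hS] at c3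
  rw [card_windows hS] at c1
  omega

/-- Existence of a right special factor of each length. -/
theorem special_exists {W : ℕ → AB} (hS : Sturmian W) (n : ℕ) :
    ∃ i i', win W n i = win W n i' ∧ W (i + n) ≠ W (i' + n) := by
  by_contra! hno
  have := Set.ncard_le_ncard_of_injOn
    (fun (f : Fin (n + 1) → AB) (t : Fin n) => f t.castSucc)
    (s := Set.range (win W (n + 1))) (t := Set.range (win W n))
    (by
      rintro _ ⟨i, rfl⟩
      exact ⟨i, rfl⟩)
    (by
      rintro _ ⟨i, rfl⟩ _ ⟨j, rfl⟩ h
      simp only [init_win] at h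
      rw [win_succ_eq_iff]
      exact ⟨h, hno i j h⟩) (Set.toFinite _)
  rw [card_windows hS, card_windows hS] at this
  omega

/-- Core contradiction: `x w x` at `i`, `y w y` at `j`, `w` a palindrome of length `n`,
`x w` right special. -/
theorem core_aux {W : ℕ → AB} (hS : Sturmian W) (n i j : ℕ)
    (hij : W i ≠ W j) (hjj : W (j + n + 1) = W j)
    (hw : ∀ t, t < n → W (i + 1 + t) = W (j + 1 + t))
    (hpal : ∀ t, t < n → W (j + 1 + t) = W (j + n - t))
    (hsp : ∃ l l', win W (n + 1) l = win W (n + 1) l' ∧ W (l + (n + 1)) ≠ W (l' + (n + 1)) ∧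
      win W (n + 1) l = win W (n + 1) i) : False := by
  obtain ⟨l, l', hl1, hl2, hl3⟩ := hsp
  have hab : ∀ x y z : AB, x ≠ y → z ≠ y → z = x := by
    intro x y z; cases x <;> cases y <;> cases z <;> simp
  -- windows starting in `[j, j+n+1]` differ from `x w`
  have hne : ∀ k, j ≤ k → k ≤ j + n + 1 → win W (n + 1) k ≠ win W (n + 1) i := by
    intro k hk1 hk2 h
    rw [win_eq_iff] at h
    have h0 := h 0 (by omega)
    simp only [Nat.add_zero] at h0
    obtain ⟨d, rfl⟩ := Nat.exists_eq_add_of_le hk1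
    rcases Nat.eq_zero_or_pos d with rfl | hd
    · exact hij h0.symm
    rcases Nat.lt_or_ge n d with hd2 | hd2
    · have : d = n + 1 := by omega
      subst this
      apply hij
      rw [← h0, ← hjj]
      rfl
    · have h1 := h (n + 1 - d) (by omega)
      have h2 : W (j + d + (n + 1 - d)) = W j := by
        rw [← hjj]; congr 1; omega
      have h3 := hw (n - d) (by omega)
      have h4 := hpal (n - d) (by omega)
      have e1 : i + 1 + (n - d) = i + (n + 1 - d) := by omega
      have e2 : j + n - (n - d) = j + d := by omega
      rw [e1] at h3
      rw [e2] at h4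
      apply hij
      rw [← h0, ← h4, ← h3, ← h1, h2]
  -- pigeonhole
  obtain ⟨k, hk, m, hm, hkm, hwin⟩ := Set.exists_ne_map_eq_of_ncard_lt_of_maps_to
    (s := ((Finset.Icc j (j + n + 1) : Finset ℕ) : Set ℕ))
    (t := Set.range (win W (n + 1)) \ {win W (n + 1) i}) (f := win W (n + 1))
    (by
      rw [Set.ncard_sdiff_singleton_of_mem (Set.mem_range_self i), card_windows hS, Set.ncard_coe_finset,
        Nat.card_Icc]
      omega)
    (by
      intro k hk
      simp only [Finset.coe_Icc, Set.mem_Icc] at hk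
      exact ⟨⟨k, rfl⟩, hne k hk.1 hk.2⟩) (Set.toFinite _)
  simp only [Finset.coe_Icc, Set.mem_Icc] at hk hm
  have hfin : ∀ k m, k < m → j ≤ k → m ≤ j + n + 1 → win W (n + 1) k = win W (n + 1) m →
      False := by
    intro k m hkm hk hm hwin
    obtain ⟨d, rfl⟩ := Nat.exists_eq_add_of_lt hkm
    have claim : ∀ t, win W (n + 1) (k + t) = win W (n + 1) (k + t + (d + 1)) ∧
        win W (n + 1) (k + t) ≠ win W (n + 1) i := by
      intro t
      induction t using Nat.strong_induction_on with
      | _ t ih =>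
        constructor
        · rcases t with _ | t
          · exact hwin
          · obtain ⟨p1, p2⟩ := ih t (by omega)
            have hnext : W (k + t + (n + 1)) = W (k + t + (d + 1) + (n + 1)) := by
              by_contra hcon
              exact p2 ((special_unique hS (n + 1) _ _ _ _ p1 hcon hl1 hl2).trans hl3)
            have := (win_succ_eq_iff W (n + 1) _ _).2 ⟨p1, hnext⟩
            rw [win_eq_iff] at this ⊢
            intro s hs
            have h := this (s + 1) (by omega)
            have e1 : k + (t + 1) + s = k + t + (s + 1) := by omega
            have e2 : k + (t + 1) + (d + 1) + s = k + t + (d + 1) + (s + 1) := by omega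
            rw [e1, e2, h]
        · rcases Nat.lt_or_ge t (d + 1) with ht | ht
          · exact hne _ (by omega) (by omega)
          · obtain ⟨s, rfl⟩ := Nat.exists_eq_add_of_le ht
            obtain ⟨p1, p2⟩ := ih s (by omega)
            have e : k + (d + 1 + s) = k + s + (d + 1) := by omega
            rw [e, ← p1]
            exact p2
    refine not_periodic hS k (d + 1) (by omega) ?_
    intro r hr
    obtain ⟨t, rfl⟩ := Nat.exists_eq_add_of_le hr
    have := (win_eq_iff _ _ _ _).1 (claim t).1 0 (by omega)
    simpa using this.symm
  rcases Nat.lt_or_gt_of_ne hkm with h | h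
  · exact hfin k m h hk.1 hm.2 hwin
  · exact hfin m k h hm.1 hk.2 hwin.symm

theorem core {W : ℕ → AB} (hS : Sturmian W) (n i j : ℕ)
    (hij : W i ≠ W j) (hii : W (i + n + 1) = W i) (hjj : W (j + n + 1) = W j)
    (hw : ∀ t, t < n → W (i + 1 + t) = W (j + 1 + t))
    (hpal : ∀ t, t < n → W (j + 1 + t) = W (j + n - t)) : False := by
  obtain ⟨l, l', hl1, hl2⟩ := special_exists hS (n + 1)
  have hsuf : ∀ p q, (∀ t, t < n + 1 → W (p + t) = W (q + t)) →
      win W n (p + 1) = win W n (q + 1) := by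
    intro p q h
    rw [win_eq_iff]
    intro t ht
    have := h (t + 1) (by omega)
    rwa [show p + 1 + t = p + (t + 1) by omega, show q + 1 + t = q + (t + 1) by omega]
  have hlw : win W n (l + 1) = win W n (i + 1) := by
    refine special_unique hS n (l + 1) (l' + 1) (i + 1) (j + 1)
      (hsuf _ _ ((win_eq_iff _ _ _ _).1 hl1)) ?_ ((win_eq_iff _ _ _ _).2 hw) ?_
    · rwa [show l + 1 + n = l + (n + 1) by omega, show l' + 1 + n = l' + (n + 1) by omega]
    · rw [show i + 1 + n = i + n + 1 by omega, show j + 1 + n = j + n + 1 by omega, hii, hjj]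
      exact hij
  have hext : ∀ p, W l = W p → win W n (l + 1) = win W n (p + 1) →
      win W (n + 1) l = win W (n + 1) p := by
    intro p h0 h
    rw [win_eq_iff] at h ⊢
    intro t ht
    rcases t with _ | t
    · exact h0
    · have := h t (by omega)
      rwa [show p + (t + 1) = p + 1 + t by omega, show l + (t + 1) = l + 1 + t by omega]
  have hwj : win W n (i + 1) = win W n (j + 1) := (win_eq_iff _ _ _ _).2 hw
  by_cases hc : W l = W i
  · exact core_aux hS n i j hij hjj hw hpal ⟨l, l', hl1, hl2, hext i hc hlw⟩
  · have hc2 : W l = W j := by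
      revert hc hij
      cases W l <;> cases W i <;> cases W j <;> simp
    refine core_aux hS n j i hij.symm hii (fun t ht => (hw t ht).symm) ?_
      ⟨l, l', hl1, hl2, hext j hc2 (hlw.trans hwj)⟩
    intro t ht
    rw [hw t ht, hpal t ht]
    have := hw (n - 1 - t) (by omega)
    rw [show i + 1 + (n - 1 - t) = i + n - t by omega,
      show j + 1 + (n - 1 - t) = j + n - t by omega] at this
    exact this.symm

/-! ### Balance -/

/-- Indicator of the letter `a`. -/
def cnt (W : ℕ → AB) (n : ℕ) : ℤ := if W n = AB.a then 1 else 0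

/-- Number of letters `a` among the first `n` letters. -/
def hgt (W : ℕ → AB) (n : ℕ) : ℤ := ∑ i ∈ Finset.range n, cnt W i

theorem hgt_succ (W : ℕ → AB) (n : ℕ) : hgt W (n + 1) = hgt W n + cnt W n := by
  simp [hgt, Finset.sum_range_succ]

theorem cnt_cases (W : ℕ → AB) (n : ℕ) : cnt W n = 0 ∨ cnt W n = 1 := by
  unfold cnt
  split_ifs <;> simp

theorem cnt_eq_iff (W : ℕ → AB) (i j : ℕ) : cnt W i = cnt W j ↔ W i = W j := by
  unfold cnt
  cases W i <;> cases W j <;> simp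

theorem hgt_reflect (W : ℕ → AB) (j m t : ℕ) (ht : t ≤ m)
    (h : ∀ s, s < t → cnt W (j + 1 + s) = cnt W (j + m - s)) :
    hgt W (j + 1 + t) - hgt W (j + 1) = hgt W (j + m + 1) - hgt W (j + m + 1 - t) := by
  induction t with
  | zero => simp
  | succ t ih =>
    have h1 := ih (by omega) (fun s hs => h s (by omega))
    have h2 := h t (by omega)
    have h3 := hgt_succ W (j + 1 + t)
    have h4 := hgt_succ W (j + m - t)
    rw [show j + m - t + 1 = j + m + 1 - t by omega] at h4
    rw [show j + 1 + (t + 1) = j + 1 + t + 1 by omega,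
      show j + m + 1 - (t + 1) = j + m - t by omega]
    omega

theorem balanced {W : ℕ → AB} (hS : Sturmian W) (n i j : ℕ) :
    hgt W (i + n) - hgt W i ≤ hgt W (j + n) - hgt W j + 1 := by
  classical
  by_contra hcon
  have hex : ∃ n, ∃ i j, hgt W (j + n) - hgt W j + 2 ≤ hgt W (i + n) - hgt W i :=
    ⟨n, i, j, by omega⟩
  clear hcon
  have hmin : ∀ k, k < Nat.find hex → ∀ i j,
      hgt W (i + k) - hgt W i ≤ hgt W (j + k) - hgt W j + 1 := by
    intro k hk i j
    by_contra hc
    exact Nat.find_min hex hk ⟨i, j, by omega⟩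
  obtain ⟨i, j, hij⟩ := Nat.find_spec hex
  generalize Nat.find hex = n at hmin hij
  clear hex
  rcases n with _ | _ | m
  · simp at hij
  · have h1 := hgt_succ W i
    have h2 := hgt_succ W j
    have h3 := cnt_cases W i
    have h4 := cnt_cases W j
    simp only [Nat.zero_add] at hij
    omega
  simp only [Nat.add_assoc, Nat.reduceAdd] at hij hmin
  have hd : ∀ t, t ≤ m → hgt W (i + t + 1) - hgt W i = hgt W (j + t + 1) - hgt W j + 1 := by
    intro t ht
    have h1 := hmin (t + 1) (by omega) i j
    have h2 := hmin (m + 1 - t) (by omega) (i + t + 1) (j + t + 1)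
    rw [show i + t + 1 + (m + 1 - t) = i + (m + 2) by omega,
      show j + t + 1 + (m + 1 - t) = j + (m + 2) by omega] at h2
    rw [show i + (t + 1) = i + t + 1 by omega, show j + (t + 1) = j + t + 1 by omega] at h1
    omega
  have hfirst : cnt W i = 1 ∧ cnt W j = 0 := by
    have h0 := hd 0 (by omega)
    have h1 := hgt_succ W i
    have h2 := hgt_succ W j
    have h3 := cnt_cases W i
    have h4 := cnt_cases W j
    simp only [Nat.add_zero] at h0
    omega
  have hlast : cnt W (i + m + 1) = 1 ∧ cnt W (j + m + 1) = 0 := by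
    have h0 := hd m le_rfl
    have h1 := hgt_succ W (i + m + 1)
    have h2 := hgt_succ W (j + m + 1)
    have h3 := cnt_cases W (i + m + 1)
    have h4 := cnt_cases W (j + m + 1)
    rw [show i + (m + 2) = i + m + 1 + 1 by omega, show j + (m + 2) = j + m + 1 + 1 by omega] at hij
    omega
  have hmid : ∀ t, t < m → cnt W (i + 1 + t) = cnt W (j + 1 + t) := by
    intro t ht
    have h0 := hd t (by omega)
    have h1 := hd (t + 1) (by omega)
    have h2 := hgt_succ W (i + t + 1)
    have h3 := hgt_succ W (j + t + 1)
    rw [show i + (t + 1) + 1 = i + t + 1 + 1 by omega,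
      show j + (t + 1) + 1 = j + t + 1 + 1 by omega] at h1
    rw [show i + 1 + t = i + t + 1 by omega, show j + 1 + t = j + t + 1 by omega]
    omega
  have hpal : ∀ t, t < m → cnt W (j + 1 + t) = cnt W (j + m - t) := by
    intro t
    induction t using Nat.strong_induction_on with
    | _ t ih =>
      intro ht
      have hr := hgt_reflect W j m t (by omega) (fun s hs => ih s hs (by omega))
      have a0 := hd t (by omega)
      have a1 := hgt_succ W (i + t + 1)
      have a2 := hgt_succ W (j + t + 1)
      have a3 := hmid t ht
      have a4 := hmid (m - 1 - t) (by omega)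
      have a5 := hgt_succ W (i + m - t)
      have a6 := hgt_succ W (j + m - t)
      have a7 := hgt_succ W (i + m + 1)
      have a8 := hgt_succ W (j + m + 1)
      have a9 := hgt_succ W i
      have a10 := hgt_succ W j
      have a11 := hd m le_rfl
      have a12 := hd (m - t) (by omega)
      have m1 := hmin (t + 2) (by omega) i (j + m - t)
      have m2 := hmin (t + 2) (by omega) (i + m - t) j
      have c1 := cnt_cases W (j + 1 + t)
      have c2 := cnt_cases W (j + m - t)
      rw [show i + (t + 2) = i + t + 1 + 1 by omega,
        show j + m - t + (t + 2) = j + m + 1 + 1 by omega] at m1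
      rw [show j + (t + 2) = j + t + 1 + 1 by omega,
        show i + m - t + (t + 2) = i + m + 1 + 1 by omega] at m2
      rw [show i + 1 + (m - 1 - t) = i + m - t by omega,
        show j + 1 + (m - 1 - t) = j + m - t by omega] at a4
      rw [show i + (m - t) + 1 = i + m - t + 1 by omega,
        show j + (m - t) + 1 = j + m - t + 1 by omega] at a12
      rw [show j + m + 1 - t = j + m - t + 1 by omega,
        show j + 1 + t = j + t + 1 by omega] at hr
      rw [show i + 1 + t = i + t + 1 by omega, show j + 1 + t = j + t + 1 by omega] at a3
      rw [show j + 1 + t = j + t + 1 by omega] at c1 ⊢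
      omega
  refine core hS m i j ?_ ?_ ?_ ?_ ?_
  · rw [Ne, ← cnt_eq_iff]; omega
  · rw [← cnt_eq_iff]; omega
  · rw [← cnt_eq_iff]; omega
  · intro t ht
    rw [← cnt_eq_iff]
    exact hmid t ht
  · intro t ht
    rw [← cnt_eq_iff]
    exact hpal t ht

/-! ### Slope -/

theorem hgt_mul_le {W : ℕ → AB} (hS : Sturmian W) (i k n m : ℕ) :
    (m : ℤ) * (hgt W (i + n) - hgt W i - 1) ≤ hgt W (k + m * n) - hgt W k ∧
    hgt W (k + m * n) - hgt W k ≤ (m : ℤ) * (hgt W (i + n) - hgt W i + 1) := by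
  induction m with
  | zero => simp
  | succ m ih =>
    have h1 := balanced hS n i (k + m * n)
    have h2 := balanced hS n (k + m * n) i
    rw [show k + (m + 1) * n = k + m * n + n by ring]
    push_cast
    constructor <;> linarith [ih.1, ih.2]

theorem exists_slope {W : ℕ → AB} (hS : Sturmian W) : ∃ α : ℝ, ∀ i n : ℕ,
    ((hgt W (i + n) - hgt W i - 1 : ℤ) : ℝ) ≤ n * α ∧
    n * α ≤ ((hgt W (i + n) - hgt W i + 1 : ℤ) : ℝ) := by
  have key : ∀ i j n m : ℕ, 
      ((hgt W (i + (n + 1)) - hgt W i - 1 : ℤ) : ℝ) / (n + 1 : ℕ) ≤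
      ((hgt W (j + (m + 1)) - hgt W j + 1 : ℤ) : ℝ) / (m + 1 : ℕ) := by
    intro i j n m
    have h1 := (hgt_mul_le hS i 0 (n + 1) (m + 1)).1
    have h2 := (hgt_mul_le hS j 0 (m + 1) (n + 1)).2
    rw [Nat.mul_comm (n + 1) (m + 1)] at h2
    have h3 := h1.trans h2
    rw [div_le_div_iff₀ (by positivity) (by positivity)]
    have h4 : (((m + 1 : ℕ) : ℤ) * (hgt W (i + (n + 1)) - hgt W i - 1 : ℤ) : ℝ) ≤
      (((n + 1 : ℕ) : ℤ) * (hgt W (j + (m + 1)) - hgt W j + 1 : ℤ) : ℝ) := by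
      exact_mod_cast h3
    push_cast at h4 ⊢
    linarith
  let A : Set ℝ := Set.range fun p : ℕ × ℕ =>
    ((hgt W (p.1 + (p.2 + 1)) - hgt W p.1 - 1 : ℤ) : ℝ) / (p.2 + 1 : ℕ)
  have hub : ∀ j m : ℕ, ((hgt W (j + (m + 1)) - hgt W j + 1 : ℤ) : ℝ) / (m + 1 : ℕ) ∈
      upperBounds A := by
    rintro j m _ ⟨⟨i, n⟩, rfl⟩
    exact key i j n m
  have hbdd : BddAbove A := ⟨_, hub 0 0⟩
  have hne : A.Nonempty := Set.range_nonempty _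
  refine ⟨sSup A, fun i n => ?_⟩
  rcases n with _ | n
  · simp
  · have h1 : ((hgt W (i + (n + 1)) - hgt W i - 1 : ℤ) : ℝ) / (n + 1 : ℕ) ≤ sSup A :=
      le_csSup hbdd ⟨(i, n), rfl⟩
    have h2 := csSup_le hne (hub i n)
    rw [div_le_iff₀ (by positivity)] at h1
    rw [le_div_iff₀ (by positivity)] at h2
    constructor
    · linarith
    · linarith

theorem slope_irrational {W : ℕ → AB} (hS : Sturmian W) (α : ℝ) (hα : ∀ i n : ℕ,
    ((hgt W (i + n) - hgt W i - 1 : ℤ) : ℝ) ≤ n * α ∧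
    n * α ≤ ((hgt W (i + n) - hgt W i + 1 : ℤ) : ℝ)) : Irrational α := by
  rintro ⟨r, rfl⟩
  obtain ⟨p, q, hq, hpq⟩ : ∃ (p : ℤ) (q : ℕ), 0 < q ∧ (q : ℝ) * (r : ℝ) = p :=
    ⟨r.num, r.den, r.den_pos, by exact_mod_cast Rat.den_mul_eq_num r⟩
  have hb : ∀ i k : ℕ, hgt W (i + k * q) - hgt W i - 1 ≤ k * p ∧
      k * p ≤ hgt W (i + k * q) - hgt W i + 1 := by
    intro i k
    obtain ⟨h1, h2⟩ := hα i (k * q)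
    have e : ((k * q : ℕ) : ℝ) * (r : ℝ) = ((k * p : ℤ) : ℝ) := by
      push_cast
      rw [mul_assoc, hpq]
    rw [e] at h1 h2
    exact ⟨by exact_mod_cast h1, by exact_mod_cast h2⟩
  have hsign : ∃ ε : ℤ, (ε = 1 ∨ ε = -1) ∧ ∀ i, 0 ≤ ε * (hgt W (i + q) - hgt W i - p) := by
    by_cases hc : ∃ i, hgt W (i + q) - hgt W i - p < 0
    · obtain ⟨i0, h0⟩ := hc
      refine ⟨-1, Or.inr rfl, fun i => ?_⟩
      have := balanced hS q i i0
      linarith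
    · push Not at hc
      exact ⟨1, Or.inl rfl, fun i => by linarith [hc i]⟩
  obtain ⟨ε, hε, hpos⟩ := hsign
  have hG : ∀ i k : ℕ, ε * (hgt W (i + k * q) - hgt W i - k * p) ≤ 1 := by
    intro i k
    have := hb i k
    rcases hε with rfl | rfl <;> linarith
  have hK : ∀ i : ℕ, ∃ K : ℕ, ∀ k, K ≤ k →
      hgt W (i + k * q + q) - hgt W (i + k * q) - p = 0 := by
    intro i
    by_cases hc : ∃ k0 : ℕ, 0 < ε * (hgt W (i + k0 * q + q) - hgt W (i + k0 * q) - p)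
    · obtain ⟨k0, hk0⟩ := hc
      refine ⟨k0 + 1, fun k hk => ?_⟩
      obtain ⟨d, rfl⟩ := Nat.exists_eq_add_of_le hk
      have hmono : ∀ d : ℕ, 1 ≤ ε * (hgt W (i + (k0 + 1 + d) * q) - hgt W (i + k0 * q)
          - (d + 1) * p) := by
        intro d
        induction d with
        | zero =>
          rw [show i + (k0 + 1 + 0) * q = i + k0 * q + q by ring]
          push_cast
          linarith
        | succ d ih =>
          have := hpos (i + (k0 + 1 + d) * q)
          rw [show i + (k0 + 1 + (d + 1)) * q = i + (k0 + 1 + d) * q + q by ring]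
          push_cast
          linarith
      have h1 := hmono d
      have h2 := hG (i + k0 * q) (d + 2)
      rw [show i + k0 * q + (d + 2) * q = i + (k0 + 1 + d) * q + q by ring] at h2
      have h3 := hpos (i + (k0 + 1 + d) * q)
      push_cast at h2
      rcases hε with rfl | rfl <;> linarith
    · push Not at hc
      refine ⟨0, fun k _ => ?_⟩
      have h1 := hc k
      have h2 := hpos (i + k * q)
      rcases hε with rfl | rfl <;> linarith
  choose K hK using hK
  have hN : ∀ i, q * (∑ r ∈ Finset.range q, K r) ≤ i → hgt W (i + q) - hgt W i - p = 0 := by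
    intro i hi
    have h1 : ∑ r ∈ Finset.range q, K r ≤ i / q := by
      rw [Nat.le_div_iff_mul_le hq, Nat.mul_comm]
      exact hi
    have h2 : K (i % q) ≤ ∑ r ∈ Finset.range q, K r :=
      Finset.single_le_sum (f := K) (fun _ _ => Nat.zero_le _)
        (Finset.mem_range.2 (Nat.mod_lt _ hq))
    have h3 := hK (i % q) (i / q) (h2.trans h1)
    rwa [Nat.mul_comm (i / q) q, Nat.mod_add_div] at h3
  refine not_periodic hS (q * (∑ r ∈ Finset.range q, K r)) q hq (fun i hi => ?_)
  · have h1 := hN i hi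
    have h2 := hN (i + 1) (by omega)
    have h3 := hgt_succ W i
    have h4 := hgt_succ W (i + q)
    rw [show i + 1 + q = i + q + 1 by omega] at h2
    rw [← cnt_eq_iff]
    omega

theorem exists_floor_or_ceil {W : ℕ → AB} (hS : Sturmian W) :
    ∃ α ρ : ℝ, Irrational α ∧ 0 < α ∧ α < 1 ∧
      ((∀ n : ℕ, hgt W n = ⌊n * α + ρ⌋) ∨ (∀ n : ℕ, hgt W n = ⌈n * α + ρ⌉ - 1)) := by
  obtain ⟨α, hα⟩ := exists_slope hS
  have hirr := slope_irrational hS α hα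
  have hcnt : ∀ n : ℕ, 0 ≤ hgt W n ∧ hgt W n ≤ n := by
    intro n
    induction n with
    | zero => simp [hgt]
    | succ n ih =>
      have h1 := hgt_succ W n
      have h2 := cnt_cases W n
      push_cast
      omega
  have hz : hgt W 0 = 0 := by simp [hgt]
  have hα' : ∀ n : ℕ, (hgt W n : ℝ) - 1 ≤ n * α ∧ n * α ≤ hgt W n + 1 := by
    intro n
    have := hα 0 n
    rw [hz, Nat.zero_add] at this
    push_cast at this
    constructor <;> linarith [this.1, this.2]
  have h0 : 0 ≤ α := by
    by_contra hneg
    push Not at hneg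
    obtain ⟨n, hn⟩ := exists_nat_gt (1 / -α)
    rw [div_lt_iff₀ (by linarith)] at hn
    have h1 := (hα' n).1
    have h2 : (0 : ℝ) ≤ hgt W n := by exact_mod_cast (hcnt n).1
    linarith
  have h1 : α ≤ 1 := by
    by_contra hneg
    push Not at hneg
    obtain ⟨n, hn⟩ := exists_nat_gt (1 / (α - 1))
    rw [div_lt_iff₀ (by linarith)] at hn
    have h1 := (hα' n).2
    have h2 : (hgt W n : ℝ) ≤ n := by exact_mod_cast (hcnt n).2
    linarith
  let A : Set ℝ := Set.range fun n : ℕ => (hgt W n : ℝ) - n * α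
  have hub : ∀ n : ℕ, (hgt W n : ℝ) - n * α + 1 ∈ upperBounds A := by
    rintro n _ ⟨m, rfl⟩
    simp only
    rcases le_total n m with h | h
    · obtain ⟨d, rfl⟩ := Nat.exists_eq_add_of_le h
      have := (hα n d).1
      push_cast at this ⊢
      linarith
    · obtain ⟨d, rfl⟩ := Nat.exists_eq_add_of_le h
      have := (hα m d).2
      push_cast at this ⊢
      linarith
  have hlow : ∀ n : ℕ, (hgt W n : ℝ) ≤ n * α + sSup A := by
    intro n
    have : (hgt W n : ℝ) - n * α ≤ sSup A := le_csSup ⟨_, hub 0⟩ ⟨n, rfl⟩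
    linarith
  have hup : ∀ n : ℕ, n * α + sSup A ≤ hgt W n + 1 := by
    intro n
    have := csSup_le (Set.range_nonempty _) (hub n)
    linarith
  refine ⟨α, sSup A, hirr, lt_of_le_of_ne h0 hirr.ne_zero.symm, lt_of_le_of_ne h1 hirr.ne_one, ?_⟩
  generalize sSup A = ρ at hlow hup
  by_cases hc : ∃ n0 : ℕ, n0 * α + ρ = hgt W n0 + 1
  · right
    obtain ⟨n0, hn0⟩ := hc
    intro n
    have hlt : (hgt W n : ℝ) < n * α + ρ := by
      refine lt_of_le_of_ne (hlow n) (fun heq => ?_)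
      have hne : ((n : ℤ) - n0) ≠ 0 := by
        intro h
        have : n = n0 := by omega
        subst this
        linarith
      have := hirr.intCast_mul hne
      apply this.ne_int (hgt W n - hgt W n0 - 1)
      push_cast
      linarith
    have : ⌈n * α + ρ⌉ = hgt W n + 1 := by
      rw [Int.ceil_eq_iff]
      push_cast
      exact ⟨by linarith, hup n⟩
    omega
  · left
    push Not at hc
    intro n
    symm
    rw [Int.floor_eq_iff]
    exact ⟨hlow n, lt_of_le_of_ne (hup n) (hc n)⟩

theorem exists_int_floor (u v : ℝ) : (∃ k : ℤ, 0 ≤ u + k ∧ v + k < 0) ↔ ⌊v⌋ < ⌊u⌋ := by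
  constructor
  · rintro ⟨k, h1, h2⟩
    have a1 : -k ≤ ⌊u⌋ := Int.le_floor.2 (by push_cast; linarith)
    have a2 : ⌊v⌋ < -k := Int.floor_lt.2 (by push_cast; linarith)
    omega
  · intro h
    refine ⟨-⌊u⌋, ?_, ?_⟩
    · push_cast
      linarith [Int.floor_le u]
    · have := Int.floor_lt.1 h
      push_cast
      linarith

theorem exists_int_ceil (u v : ℝ) : (∃ k : ℤ, 0 < u + k ∧ v + k ≤ 0) ↔ ⌈v⌉ < ⌈u⌉ := by
  constructor
  · rintro ⟨k, h1, h2⟩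
    have a1 : -k < ⌈u⌉ := Int.lt_ceil.2 (by push_cast; linarith)
    have a2 : ⌈v⌉ ≤ -k := Int.ceil_le.2 (by push_cast; linarith)
    omega
  · intro h
    refine ⟨-⌈v⌉, ?_, ?_⟩
    · have := Int.lt_ceil.1 h
      push_cast
      linarith
    · push_cast
      linarith [Int.le_ceil v]

theorem mem_Ico_iff_floor (x c α : ℝ) :
    (∃ k : ℤ, x + k ∈ Set.Ico c (c + α)) ↔ ⌊x - c - α⌋ < ⌊x - c⌋ := by
  rw [← exists_int_floor]
  refine exists_congr fun k => ?_
  rw [Set.mem_Ico]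
  constructor <;> rintro ⟨h1, h2⟩ <;> constructor <;> linarith

theorem mem_Ioc_iff_ceil (x c α : ℝ) :
    (∃ k : ℤ, x + k ∈ Set.Ioc c (c + α)) ↔ ⌈x - c - α⌉ < ⌈x - c⌉ := by
  rw [← exists_int_ceil]
  refine exists_congr fun k => ?_
  rw [Set.mem_Ioc]
  constructor <;> rintro ⟨h1, h2⟩ <;> constructor <;> linarith

theorem eq_b_iff (x : AB) : x = AB.b ↔ ¬ x = AB.a := by cases x <;> simp

theorem mechanical_of_sturmian {W : ℕ → AB} (hS : Sturmian W) : MechanicalIrrational W := by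
  obtain ⟨α, ρ, hirr, h0, h1, h⟩ := exists_floor_or_ceil hS
  have hW : ∀ n, W n = AB.a ↔ hgt W n < hgt W (n + 1) := by
    intro n
    rw [hgt_succ]
    unfold cnt
    split_ifs with hn <;> simp [hn]
  refine ⟨α, hirr, h0, h1, 0, by simp, -ρ - α, ?_⟩
  have e1 : ∀ n : ℕ, (0 + n * α - (-ρ - α) - α : ℝ) = n * α + ρ := by intro n; ring
  have e2 : ∀ n : ℕ, (0 + n * α - (-ρ - α) : ℝ) = (n + 1 : ℕ) * α + ρ := by
    intro n; push_cast; ring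
  rcases h with h | h
  · left
    intro n
    have key : W n = AB.a ↔ ∃ k : ℤ, 0 + n * α + k ∈ Set.Ico (-ρ - α) (-ρ - α + α) := by
      rw [mem_Ico_iff_floor, e1, e2, ← h, ← h, hW]
    exact ⟨key, by rw [eq_b_iff, key]⟩
  · right
    intro n
    have key : W n = AB.a ↔ ∃ k : ℤ, 0 + n * α + k ∈ Set.Ioc (-ρ - α) (-ρ - α + α) := by
      rw [mem_Ioc_iff_ceil, e1, e2, hW, h, h]
      omega
    exact ⟨key, by rw [eq_b_iff, key]⟩

/-! ### Mechanical words are Sturmian -/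

theorem ncard_range_le {β γ : Type*} (f : ℕ → β) (g : ℕ → γ)
    (h : ∀ i j, g i = g j → f i = f j) (hfin : (Set.range g).Finite) :
    (Set.range f).ncard ≤ (Set.range g).ncard := by
  have hF : Function.FactorsThrough f g := fun i j hij => h i j hij
  have : Set.range f = (Function.extend g f (fun _ => f 0)) '' Set.range g := by
    rw [← Set.range_comp]
    congr 1
    funext i
    exact (hF.extend_apply _ i).symm
  rw [this]
  exact Set.ncard_image_le hfin

theorem dense_orbit {α : ℝ} (hα : Irrational α) (ρ u v : ℝ) (hu : 0 ≤ u) (huv : u < v)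
    (hv : v ≤ 1) : ∃ i : ℕ, u < Int.fract (ρ + i * α) ∧ Int.fract (ρ + i * α) < v := by
  have h1 : DenseRange (· • (α : UnitAddCircle) : ℤ → UnitAddCircle) :=
    AddCircle.denseRange_zsmul_coe_iff.2 (by simpa using hα)
  rw [denseRange_zsmul_iff_nsmul] at h1
  have h2 := QuotientAddGroup.dense_preimage_mk.2 h1
  obtain ⟨x, hx, hx2⟩ := h2.exists_between (x := u - ρ) (y := v - ρ) (by linarith)
  obtain ⟨i, hi⟩ := hx
  have hi' : ((x - i * α : ℝ) : UnitAddCircle) = 0 := by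
    rw [AddCircle.coe_sub, sub_eq_zero, ← nsmul_eq_mul]
    exact hi.symm
  obtain ⟨k, hk⟩ := (AddCircle.coe_eq_zero_iff (1 : ℝ)).1 hi'
  simp only [zsmul_eq_mul, mul_one] at hk
  have hf : Int.fract (ρ + i * α) = ρ + x := by
    rw [Int.fract_eq_iff]
    refine ⟨by linarith [hx2.1], by linarith [hx2.2], -k, ?_⟩
    push_cast
    linarith
  refine ⟨i, ?_, ?_⟩
  · rw [hf]; linarith [hx2.1]
  · rw [hf]; linarith [hx2.2]

theorem ncard_lower {T : Finset ℝ} (y : ℕ → ℝ)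
    (hT : ∀ t ∈ T, 0 < t ∧ t < 1)
    (hd : ∀ u v : ℝ, 0 ≤ u → u < v → v ≤ 1 → ∃ i, u < y i ∧ y i < v) :
    (Set.range fun i => T.filter (· ≤ y i)).ncard = T.card + 1 := by
  classical
  have hrange : (Set.range fun i => T.filter (· ≤ y i)) =
      ((insert T (T.image fun t => T.filter (· < t)) : Finset (Finset ℝ)) : Set (Finset ℝ)) := by
    ext B
    simp only [Set.mem_range, Finset.coe_insert, Finset.coe_image, Set.mem_insert_iff,
      Set.mem_image, Finset.mem_coe]
    constructor
    · rintro ⟨i, rfl⟩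
      by_cases hne : (T.filter (y i < ·)).Nonempty
      · right
        obtain ⟨t, ht, hmin⟩ := Finset.exists_min_image _ id hne
        rw [Finset.mem_filter] at ht
        refine ⟨t, ht.1, ?_⟩
        apply Finset.filter_congr
        intro s hs
        constructor
        · intro h
          by_contra hc
          push Not at hc
          have := hmin s (Finset.mem_filter.2 ⟨hs, hc⟩)
          simp only [id] at this
          linarith
        · intro h
          linarith [ht.2]
      · left
        rw [Finset.not_nonempty_iff_eq_empty, Finset.filter_eq_empty_iff] at hne
        exact Finset.filter_true_of_mem fun s hs => not_lt.1 (hne hs)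
    · rintro (rfl | ⟨t, ht, rfl⟩)
      · -- above all points
        obtain ⟨m, hm0, hm1, hm⟩ : ∃ m : ℝ, 0 ≤ m ∧ m < 1 ∧ ∀ s ∈ B, s ≤ m := by
          by_cases hne : B.Nonempty
          · obtain ⟨t, ht, hmax⟩ := Finset.exists_max_image _ id hne
            exact ⟨t, (hT t ht).1.le, (hT t ht).2, hmax⟩
          · rw [Finset.not_nonempty_iff_eq_empty] at hne
            subst hne
            exact ⟨0, le_rfl, one_pos, by simp⟩
        obtain ⟨i, h1, h2⟩ := hd m 1 hm0 hm1 le_rfl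
        exact ⟨i, Finset.filter_true_of_mem fun s hs => (hm s hs).trans h1.le⟩
      · obtain ⟨m, hm0, hm1, hm⟩ : ∃ m : ℝ, 0 ≤ m ∧ m < t ∧ ∀ s ∈ T, s < t → s ≤ m := by
          by_cases hne : (T.filter (· < t)).Nonempty
          · obtain ⟨r, hr, hmax⟩ := Finset.exists_max_image _ id hne
            rw [Finset.mem_filter] at hr
            exact ⟨r, (hT r hr.1).1.le, hr.2,
              fun s hs hst => hmax s (Finset.mem_filter.2 ⟨hs, hst⟩)⟩
          · rw [Finset.not_nonempty_iff_eq_empty, Finset.filter_eq_empty_iff] at hne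
            exact ⟨0, le_rfl, (hT t ht).1, fun s hs hst => absurd hst (hne hs)⟩
        obtain ⟨i, h1, h2⟩ := hd m t hm0 hm1 (hT t ht).2.le
        refine ⟨i, Finset.filter_congr fun s hs => ⟨fun h => by linarith, fun h => ?_⟩⟩
        exact (hm s hs h).trans h1.le
  rw [hrange, Set.ncard_coe_finset, Finset.card_insert_of_notMem, Finset.card_image_of_injOn]
  · intro s hs t ht hst
    simp only at hst
    by_contra hne
    rcases lt_or_gt_of_ne hne with h | h
    · have : s ∈ T.filter (· < t) := Finset.mem_filter.2 ⟨hs, h⟩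
      rw [← hst] at this
      simp at this
    · have : t ∈ T.filter (· < s) := Finset.mem_filter.2 ⟨ht, h⟩
      rw [hst] at this
      simp at this
  · intro h
    rw [Finset.mem_image] at h
    obtain ⟨t, ht, h⟩ := h
    rw [← h] at ht
    simp at ht

theorem floor_add_split (y z : ℝ) (hy0 : 0 ≤ y) (hy1 : y < 1) :
    ⌊y + z⌋ = ⌊z⌋ + (if 1 - Int.fract z ≤ y then 1 else 0) := by
  have h1 := Int.fract_add_floor z
  have h2 := Int.fract_nonneg z
  have h3 := Int.fract_lt_one z
  split_ifs with h
  · rw [Int.floor_eq_iff]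
    push_cast
    constructor <;> linarith
  · rw [Int.floor_eq_iff]
    push_cast
    constructor <;> linarith

theorem sturmian_of_floor {W : ℕ → AB} {α : ℝ} (hα : Irrational α) (h0 : 0 < α) (h1 : α < 1)
    (ρ : ℝ) (x : AB) (hW : ∀ n : ℕ, W n = x ↔ ⌊ρ + n * α⌋ < ⌊ρ + (n + 1 : ℕ) * α⌋) :
    Sturmian W := by
  classical
  intro n _
  rw [complexity_eq]
  let T : Finset ℝ := (Finset.range n).image fun j : ℕ => 1 - Int.fract ((j + 1 : ℕ) * α)
  have hTcard : T.card = n := by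
    rw [Finset.card_image_of_injective, Finset.card_range]
    intro j k hjk
    simp only at hjk
    by_contra hne
    have hfr : Int.fract (((j + 1 : ℕ) : ℝ) * α) = Int.fract (((k + 1 : ℕ) : ℝ) * α) := by linarith
    obtain ⟨z, hz⟩ := Int.fract_eq_fract.1 hfr
    have hne' : ((j : ℤ) - k) ≠ 0 := by omega
    apply (hα.intCast_mul hne').ne_int z
    push_cast at hz ⊢
    linarith
  have hTmem : ∀ t ∈ T, 0 < t ∧ t < 1 := by
    intro t ht
    obtain ⟨j, _, rfl⟩ := Finset.mem_image.1 ht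
    have hi : Irrational ((j + 1 : ℕ) * α) := hα.natCast_mul (by omega)
    have a1 := Int.fract_lt_one (((j + 1 : ℕ) : ℝ) * α)
    have a2 := Int.fract_nonneg (((j + 1 : ℕ) : ℝ) * α)
    have a3 : Int.fract (((j + 1 : ℕ) : ℝ) * α) ≠ 0 := by
      intro h
      apply hi.ne_int ⌊((j + 1 : ℕ) : ℝ) * α⌋
      have := Int.fract_add_floor (((j + 1 : ℕ) : ℝ) * α)
      linarith
    have a4 := lt_of_le_of_ne a2 a3.symm
    constructor <;> linarith
  have hcard := ncard_lower (T := T) (fun i : ℕ => Int.fract (ρ + i * α)) hTmem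
    (dense_orbit hα ρ)
  rw [hTcard] at hcard
  rw [← hcard]
  -- relation between windows and floors
  have hstep : ∀ m : ℕ, ⌊ρ + (m + 1 : ℕ) * α⌋ = ⌊ρ + m * α⌋ + if W m = x then 1 else 0 := by
    intro m
    have a1 : ⌊ρ + m * α⌋ ≤ ⌊ρ + (m + 1 : ℕ) * α⌋ :=
      Int.floor_le_floor (by push_cast; linarith)
    have a2 : ⌊ρ + (m + 1 : ℕ) * α⌋ ≤ ⌊ρ + m * α⌋ + 1 := by
      rw [← Int.floor_add_one]
      exact Int.floor_le_floor (by push_cast; linarith)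
    have a3 := hW m
    split_ifs with h
    · have := a3.1 h
      omega
    · have a4 : ¬ ⌊ρ + m * α⌋ < ⌊ρ + (m + 1 : ℕ) * α⌋ := fun h' => h (a3.2 h')
      omega
  have hwin : ∀ i i', win W n i = win W n i' ↔ ∀ j, j ≤ n →
      ⌊ρ + (i + j : ℕ) * α⌋ - ⌊ρ + i * α⌋ = ⌊ρ + (i' + j : ℕ) * α⌋ - ⌊ρ + i' * α⌋ := by
    intro i i'
    rw [win_eq_iff]
    constructor
    · intro h j
      induction j with
      | zero => intro _; simp
      | succ j ih =>
        intro hj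
        have b1 := ih (by omega)
        have b2 := hstep (i + j)
        have b3 := hstep (i' + j)
        rw [h j (by omega)] at b2
        rw [← Nat.add_assoc, ← Nat.add_assoc, b2, b3]
        linarith
    · intro h j hj
      have b0 := h j (by omega)
      have b1 := h (j + 1) (by omega)
      rw [← Nat.add_assoc, ← Nat.add_assoc, hstep, hstep] at b1
      have b2 : (if W (i + j) = x then (1 : ℤ) else 0) = if W (i' + j) = x then 1 else 0 := by
        linarith
      revert b2
      cases x <;> cases W (i + j) <;> cases W (i' + j) <;> simp
  have hfl : ∀ i j : ℕ, ⌊ρ + (i + j : ℕ) * α⌋ - ⌊ρ + i * α⌋ =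
      ⌊j * α⌋ + if 1 - Int.fract (j * α) ≤ Int.fract (ρ + i * α) then 1 else 0 := by
    intro i j
    rw [← floor_add_split _ _ (Int.fract_nonneg _) (Int.fract_lt_one _)]
    have : ρ + (i + j : ℕ) * α = Int.fract (ρ + i * α) + j * α + (⌊ρ + i * α⌋ : ℤ) := by
      have := Int.fract_add_floor (ρ + i * α)
      push_cast
      linarith
    rw [this, Int.floor_add_intCast]
    ring
  have hA : ∀ i i', win W n i = win W n i' ↔
      T.filter (· ≤ Int.fract (ρ + i * α)) = T.filter (· ≤ Int.fract (ρ + i' * α)) := by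
    intro i i'
    rw [hwin, Finset.filter_inj']
    constructor
    · intro h t ht
      obtain ⟨j, hj, rfl⟩ := Finset.mem_image.1 ht
      have := h (j + 1) (by simpa using hj)
      rw [hfl, hfl] at this
      by_cases c1 : 1 - Int.fract ((j + 1 : ℕ) * α) ≤ Int.fract (ρ + i * α) <;>
        by_cases c2 : 1 - Int.fract ((j + 1 : ℕ) * α) ≤ Int.fract (ρ + i' * α) <;>
        simp only [c1, c2, if_true, if_false] at this ⊢
      · omega
      · omega
    · intro h j hj
      rw [hfl, hfl]
      rcases j with _ | j
      · have c : ∀ z : ℝ, ¬ (1 - Int.fract (((0 : ℕ) : ℝ) * α) ≤ Int.fract z) := by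
          intro z
          simp [Int.fract_lt_one]
        simp only [c, if_false]
      · have := h (Finset.mem_image.2 ⟨j, Finset.mem_range.2 (by omega), rfl⟩)
        simp only [this]
  have hfin : (Set.range fun i : ℕ => T.filter (· ≤ Int.fract (ρ + i * α))).Finite := by
    apply Set.finite_of_ncard_pos
    rw [hcard]
    omega
  apply le_antisymm
  · exact ncard_range_le _ _ (fun i j h => (hA i j).2 h) hfin
  · exact ncard_range_le _ _ (fun i j h => (hA i j).1 h) (Set.toFinite _)

theorem sturmian_of_mechanical {W : ℕ → AB} (h : MechanicalIrrational W) : Sturmian W := by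
  obtain ⟨α, hα, h0, h1, x₀, _, c, h | h⟩ := h
  · refine sturmian_of_floor hα h0 h1 (x₀ - c - α) AB.a fun n => ?_
    rw [(h n).1, mem_Ico_iff_floor]
    have e1 : x₀ + n * α - c - α = x₀ - c - α + n * α := by ring
    have e2 : x₀ + n * α - c = x₀ - c - α + (n + 1 : ℕ) * α := by push_cast; ring
    rw [e1, e2]
  · have hα' : Irrational (1 - α) := by simpa using hα.intCast_sub 1
    refine sturmian_of_floor hα' (by linarith) (by linarith) (-(x₀ - c - α)) AB.b fun n => ?_
    rw [(h n).2, mem_Ioc_iff_ceil]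
    have e1 : -(x₀ - c - α) + n * (1 - α) = -(x₀ + n * α - c - α) + (n : ℤ) := by
      push_cast; ring
    have e2 : -(x₀ - c - α) + (n + 1 : ℕ) * (1 - α) = -(x₀ + n * α - c) + ((n : ℤ) + 1 : ℤ) := by
      push_cast; ring
    rw [e1, e2, Int.floor_add_intCast, Int.floor_add_intCast, Int.floor_neg, Int.floor_neg]
    have m1 : ⌈x₀ + n * α - c - α⌉ ≤ ⌈x₀ + n * α - c⌉ := Int.ceil_le_ceil (by linarith)
    omega

/-- A recurrent binary word is Sturmian iff it is a mechanical word with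
irrational slope. -/
theorem sturmian_iff_mechanical (W : ℕ → AB) (hrec : Recurrent W) :
    Sturmian W ↔ MechanicalIrrational W := by
  exact ⟨mechanical_of_sturmian, sturmian_of_mechanical⟩
end
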